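/- arXiv:2006.11088 — 2 statements merged into one kernel-verified Lean document; each statement's English description precedes it below -/
import Mathlib

section
/- Let 𝒱 be a v-transform with fulcrum δ, differentiable at every point of [0,1] except δ, with conditional down probability Δ taking values in [0,1] and measurable, and let 𝒱⁻¹(v,w) be its stochastic inversion function. If V and W are independent random variables each uniformly distributed on [0,1], then U = 𝒱⁻¹(V, W) is uniformly distributed on [0,1]. -/
open Set MeasureTheory ProbabilityTheory

/-- A v-transform with fulcrum `δ`: a mapping of `[0,1]` to `[0,1]` with
`𝒱 0 = 𝒱 1 = 1`, `𝒱 δ = 0`, continuous, strictly decreasing on `[0,δ]`,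
strictly increasing on `[δ,1]`, and satisfying the square property. -/
structure IsVTransform (V : ℝ → ℝ) (δ : ℝ) : Prop where
  mapsTo : ∀ u ∈ Set.Icc (0:ℝ) 1, V u ∈ Set.Icc (0:ℝ) 1
  fulcrum_mem : δ ∈ Set.Ioo (0:ℝ) 1
  map_zero : V 0 = 1
  map_one : V 1 = 1
  map_fulcrum : V δ = 0
  contOn : ContinuousOn V (Set.Icc 0 1)
  strictAntiOn : StrictAntiOn V (Set.Icc 0 δ)
  strictMonoOn : StrictMonoOn V (Set.Icc δ 1)
  square : ∀ u ∈ Set.Icc (0:ℝ) 1, u ≠ δ →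
    ∃ us ∈ Set.Icc (0:ℝ) 1, ((u < δ ∧ δ < us) ∨ (us < δ ∧ δ < u)) ∧
      V us = V u ∧ |us - u| = V u

/-- The partial inverse `𝒱⁻¹(v) = inf {u ∈ [0,1] : 𝒱(u) = v}` of a v-transform,
taking values in `[0,δ]` (the decreasing branch). -/
noncomputable def partialInverse (V : ℝ → ℝ) (v : ℝ) : ℝ :=
  sInf {u | u ∈ Set.Icc (0:ℝ) 1 ∧ V u = v}

/-- The conditional down probability `Δ(v) = -1 / 𝒱′(𝒱⁻¹(v))`, where the derivative
is taken within `[0,δ]` (so that at the fulcrum it is the left derivative, following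
the convention of the paper). -/
noncomputable def downProb (V : ℝ → ℝ) (δ : ℝ) (v : ℝ) : ℝ :=
  -1 / derivWithin V (Set.Icc 0 δ) (partialInverse V v)

/-- The stochastic inversion function `𝒱⁻¹(v,w)` of a v-transform. -/
noncomputable def stochInv (V : ℝ → ℝ) (δ : ℝ) (v w : ℝ) : ℝ :=
  if w ≤ downProb V δ v then partialInverse V v else v + partialInverse V v

/-!
On the decreasing branch, `u + 𝒱 u` is the dual of `u`, so `p = 𝒱⁻¹` decreases from `δ` to `0` while
`q v = v + p v` increases from `δ` to `1`, and `p' = -Δ`, `q' = 1 - Δ` with `0 ≤ Δ ≤ 1`. Integrating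
out `W`, the law of `U` is the sum of the image of `Δ(v) dv` under `p` and the image of
`(1 - Δ(v)) dv` under `q`. By the change of variables formula these are at most Lebesgue measure on
`[0,δ]` and on `[δ,1]` respectively, so the law of `U` is at most the uniform law; both have total
mass one, hence they agree.
-/

open scoped ENNReal

theorem setLIntegral_Icc_ite_le {d : ℝ} (hd : d ∈ Icc (0 : ℝ) 1) (a b : ℝ≥0∞) :
    ∫⁻ w in Icc (0 : ℝ) 1, (if w ≤ d then a else b) =
      ENNReal.ofReal d * a + ENNReal.ofReal (1 - d) * b := by
  have hbelow : ∫⁻ w in Icc 0 d, (if w ≤ d then a else b) = ENNReal.ofReal d * a := by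
    rw [setLIntegral_congr_fun (g := fun _ ↦ a) measurableSet_Icc fun w hw ↦ if_pos hw.2,
      setLIntegral_const, Real.volume_Icc, sub_zero, mul_comm]
  have habove : ∫⁻ w in Ioc d 1, (if w ≤ d then a else b) = ENNReal.ofReal (1 - d) * b := by
    rw [setLIntegral_congr_fun (g := fun _ ↦ b) measurableSet_Ioc fun w hw ↦ if_neg hw.1.not_ge,
      setLIntegral_const, Real.volume_Ioc, mul_comm]
  rw [← Icc_union_Ioc_eq_Icc hd.1 hd.2, lintegral_union measurableSet_Ioc, hbelow, habove]
  exact disjoint_left.2 fun w hw hw' ↦ hw.2.not_gt hw'.1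

section Mixture

variable {α β : Type*} [MeasurableSpace α] [MeasurableSpace β] {ν : Measure α} {d : α → ℝ}
  {f g : α → β}

theorem aemeasurable_prod_ite_le {ρ : Measure ℝ} (hd : AEMeasurable d ν)
    (hf : AEMeasurable f ν) (hg : AEMeasurable g ν) :
    AEMeasurable (fun z : α × ℝ ↦ if z.2 ≤ d z.1 then f z.1 else g z.1) (ν.prod ρ) := by
  refine ⟨fun z ↦ if z.2 ≤ hd.mk d z.1 then hf.mk f z.1 else hg.mk g z.1,
    Measurable.ite (measurableSet_le measurable_snd (hd.measurable_mk.comp measurable_fst))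
      (hf.measurable_mk.comp measurable_fst) (hg.measurable_mk.comp measurable_fst), ?_⟩
  have hfst := Measure.quasiMeasurePreserving_fst (μ := ν) (ν := ρ)
  filter_upwards [hfst.ae hd.ae_eq_mk, hfst.ae hf.ae_eq_mk, hfst.ae hg.ae_eq_mk] with z hdz hfz hgz
  rw [hdz, hfz, hgz]

theorem map_prod_ite_le (hd : AEMeasurable d ν)
    (hd01 : ∀ᵐ x ∂ν, d x ∈ Icc (0 : ℝ) 1) (hf : AEMeasurable f ν) (hg : AEMeasurable g ν) :
    (ν.prod (volume.restrict (Icc (0 : ℝ) 1))).map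
        (fun z ↦ if z.2 ≤ d z.1 then f z.1 else g z.1) =
      (ν.withDensity fun x ↦ ENNReal.ofReal (d x)).map f +
        (ν.withDensity fun x ↦ ENNReal.ofReal (1 - d x)).map g := by
  have hite := aemeasurable_prod_ite_le (ρ := volume.restrict (Icc (0 : ℝ) 1)) hd hf hg
  have hd₁ : AEMeasurable (fun x ↦ ENNReal.ofReal (d x)) ν := hd.ennreal_ofReal
  have hd₂ : AEMeasurable (fun x ↦ ENNReal.ofReal (1 - d x)) ν := (hd.const_sub 1).ennreal_ofReal
  refine Measure.ext_of_lintegral _ fun φ hφ ↦ ?_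
  have hφf : AEMeasurable (fun x ↦ φ (f x)) ν := hφ.comp_aemeasurable hf
  have hφg : AEMeasurable (fun x ↦ φ (g x)) ν := hφ.comp_aemeasurable hg
  have hdφf : AEMeasurable (fun x ↦ ENNReal.ofReal (d x) * φ (f x)) ν := hd₁.mul hφf
  calc
    _ = ∫⁻ x, (∫⁻ w in Icc (0 : ℝ) 1, φ (if w ≤ d x then f x else g x)) ∂ν := by
      rw [lintegral_map' hφ.aemeasurable hite]
      exact lintegral_prod _ (hφ.comp_aemeasurable hite)
    _ = ∫⁻ x, ENNReal.ofReal (d x) * φ (f x) + ENNReal.ofReal (1 - d x) * φ (g x) ∂ν := by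
      refine lintegral_congr_ae (hd01.mono fun x hx ↦ ?_)
      simp only [apply_ite φ, setLIntegral_Icc_ite_le hx]
    _ = _ := by
      rw [lintegral_add_left' hdφf, lintegral_add_measure,
        lintegral_map' hφ.aemeasurable (hf.mono_ac (withDensity_absolutelyContinuous _ _)),
        lintegral_map' hφ.aemeasurable (hg.mono_ac (withDensity_absolutelyContinuous _ _)),
        lintegral_withDensity_eq_lintegral_mul₀ hd₁ hφf,
        lintegral_withDensity_eq_lintegral_mul₀ hd₂ hφg]
      rfl

end Mixture

theorem map_withDensity_abs_deriv_le {f f' : ℝ → ℝ} {s t : Set ℝ} (hs : NullMeasurableSet s)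
    (hf' : ∀ᵐ x ∂volume.restrict s, HasDerivWithinAt f (f' x) s x) (hinj : InjOn f s)
    (hst : MapsTo f s t) :
    ((volume.restrict s).withDensity fun x ↦ ENNReal.ofReal |f' x|).map f ≤
      volume.restrict t := by
  let r := s ∩ {x | HasDerivWithinAt f (f' x) s x}
  have hrs : r =ᵐ[volume] s := by
    filter_upwards [(ae_restrict_iff'₀ hs).1 hf'] with x hx
    exact propext ⟨fun h ↦ h.1, fun h ↦ ⟨h, hx h⟩⟩
  have hmap := map_withDensity_abs_det_fderiv_eq_addHaar volume (hs.congr hrs.symm)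
    (fun x hx ↦ (hx.2.mono inter_subset_left).hasFDerivWithinAt) (hinj.mono inter_subset_left)
  simp only [ContinuousLinearMap.det_toSpanSingleton] at hmap
  rw [← Measure.restrict_congr_set hrs, hmap]
  exact Measure.restrict_mono_set volume (hst.mono_left inter_subset_left).image_subset

theorem restrict_Icc_add_restrict_Icc {α : Type*} [LinearOrder α] [TopologicalSpace α]
    [OrderClosedTopology α] [MeasurableSpace α] [OpensMeasurableSpace α] (ν : Measure α)
    [NullSingletonClass ν] {a b c : α} (hab : a ≤ b) (hbc : b ≤ c) :
    ν.restrict (Icc a b) + ν.restrict (Icc b c) = ν.restrict (Icc a c) := by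
  rw [← restrict_Ioc_eq_restrict_Icc (a := b),
    ← Measure.restrict_union (disjoint_left.2 fun x hx hx' ↦ hx.2.not_gt hx'.1) measurableSet_Ioc,
    Icc_union_Ioc_eq_Icc hab hbc]

namespace IsVTransform

variable {V : ℝ → ℝ} {δ : ℝ}

theorem Icc_zero_fulcrum_subset (hV : IsVTransform V δ) : Icc 0 δ ⊆ Icc 0 1 :=
  Icc_subset_Icc_right hV.fulcrum_mem.2.le

theorem leftInvOn_partialInverse (hV : IsVTransform V δ) :
    LeftInvOn (partialInverse V) V (Icc 0 δ) := by
  refine fun u hu ↦ IsLeast.csInf_eq ⟨⟨hV.Icc_zero_fulcrum_subset hu, rfl⟩, ?_⟩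
  rintro x ⟨hx, hxu⟩
  by_contra! hlt
  exact (hV.strictAntiOn ⟨hx.1, hlt.le.trans hu.2⟩ hu hlt).ne' hxu

theorem surjOn_Icc (hV : IsVTransform V δ) : SurjOn V (Icc 0 δ) (Icc 0 1) := by
  simpa only [SurjOn, hV.map_zero, hV.map_fulcrum] using
    intermediate_value_Icc' hV.fulcrum_mem.1.le (hV.contOn.mono hV.Icc_zero_fulcrum_subset)

theorem mapsTo_partialInverse (hV : IsVTransform V δ) :
    MapsTo (partialInverse V) (Icc 0 1) (Icc 0 δ) :=
  hV.leftInvOn_partialInverse.mapsTo hV.surjOn_Icc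

theorem rightInvOn_partialInverse (hV : IsVTransform V δ) :
    RightInvOn (partialInverse V) V (Icc 0 1) := by
  intro v hv
  obtain ⟨u, hu, rfl⟩ := hV.surjOn_Icc hv
  rw [hV.leftInvOn_partialInverse hu]

theorem partialInverse_mem_Ioo (hV : IsVTransform V δ) {v : ℝ} (hv : v ∈ Ioo (0 : ℝ) 1) :
    partialInverse V v ∈ Ioo 0 δ := by
  have hmem := hV.mapsTo_partialInverse (Ioo_subset_Icc_self hv)
  have hinv := hV.rightInvOn_partialInverse (Ioo_subset_Icc_self hv)
  refine ⟨hmem.1.lt_of_ne fun h ↦ hv.2.ne ?_, hmem.2.lt_of_ne fun h ↦ hv.1.ne' ?_⟩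
  · rw [← hinv, ← h, hV.map_zero]
  · rw [← hinv, h, hV.map_fulcrum]

theorem add_apply_mem_Icc_and_apply_add_apply_eq (hV : IsVTransform V δ) {u : ℝ}
    (hu : u ∈ Icc 0 δ) : u + V u ∈ Icc δ 1 ∧ V (u + V u) = V u := by
  obtain rfl | hne := eq_or_ne u δ
  · simp [hV.map_fulcrum, hV.fulcrum_mem.2.le]
  obtain ⟨t, ht, ⟨-, hδt⟩ | ⟨-, hδu⟩, hVt, hdist⟩ :=
    hV.square u (hV.Icc_zero_fulcrum_subset hu) hne
  · rw [abs_of_nonneg (sub_nonneg.2 (hu.2.trans hδt.le))] at hdist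
    obtain rfl : t = u + V u := by linarith
    exact ⟨⟨hδt.le, ht.2⟩, hVt⟩
  · exact absurd hu.2 hδu.not_ge

theorem mapsTo_add_partialInverse (hV : IsVTransform V δ) :
    MapsTo (fun v ↦ v + partialInverse V v) (Icc 0 1) (Icc δ 1) := by
  intro v hv
  have hdual := (hV.add_apply_mem_Icc_and_apply_add_apply_eq (hV.mapsTo_partialInverse hv)).1
  rwa [hV.rightInvOn_partialInverse hv, add_comm] at hdual

theorem rightInvOn_add_partialInverse (hV : IsVTransform V δ) :
    RightInvOn (fun v ↦ v + partialInverse V v) V (Icc 0 1) := by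
  intro v hv
  have hdual := (hV.add_apply_mem_Icc_and_apply_add_apply_eq (hV.mapsTo_partialInverse hv)).2
  rwa [hV.rightInvOn_partialInverse hv, add_comm] at hdual

theorem strictAntiOn_partialInverse (hV : IsVTransform V δ) :
    StrictAntiOn (partialInverse V) (Icc 0 1) := by
  intro v hv w hw hvw
  rwa [← hV.strictAntiOn.lt_iff_gt (hV.mapsTo_partialInverse hv) (hV.mapsTo_partialInverse hw),
    hV.rightInvOn_partialInverse hv, hV.rightInvOn_partialInverse hw]

theorem strictMonoOn_add_partialInverse (hV : IsVTransform V δ) :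
    StrictMonoOn (fun v ↦ v + partialInverse V v) (Icc 0 1) := by
  intro v hv w hw hvw
  rwa [← hV.strictMonoOn.lt_iff_lt (hV.mapsTo_add_partialInverse hv)
    (hV.mapsTo_add_partialInverse hw), hV.rightInvOn_add_partialInverse hv,
    hV.rightInvOn_add_partialInverse hw]

theorem lipschitzOnWith_partialInverse (hV : IsVTransform V δ) :
    LipschitzOnWith 1 (partialInverse V) (Icc 0 1) := by
  refine LipschitzOnWith.of_le_add fun v hv w hw ↦ ?_
  rcases le_total v w with hvw | hwv
  · have hle := hV.strictMonoOn_add_partialInverse.monotoneOn hv hw hvw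
    rw [dist_comm, Real.dist_eq, abs_of_nonneg (sub_nonneg.2 hvw)]
    linarith
  · exact (hV.strictAntiOn_partialInverse.antitoneOn hw hv hwv).trans
      (le_add_of_nonneg_right dist_nonneg)

theorem antitoneOn_add_id (hV : IsVTransform V δ) : AntitoneOn (V + id) (Icc 0 δ) := by
  intro u hu u' hu' huu'
  have hle := hV.strictMonoOn_add_partialInverse.monotoneOn
    (hV.mapsTo u' (hV.Icc_zero_fulcrum_subset hu')) (hV.mapsTo u (hV.Icc_zero_fulcrum_subset hu))
    (hV.strictAntiOn.antitoneOn hu hu' huu')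
  simpa only [Pi.add_apply, id_eq, hV.leftInvOn_partialInverse hu,
    hV.leftInvOn_partialInverse hu'] using hle

theorem deriv_le_neg_one (hV : IsVTransform V δ) {u : ℝ} (hu : u ∈ Ioo 0 δ)
    (hd : DifferentiableAt ℝ V u) : deriv V u ≤ -1 := by
  have hnonpos : derivWithin (V + id) (Icc 0 δ) u ≤ 0 := hV.antitoneOn_add_id.derivWithin_nonpos
  rw [derivWithin_of_mem_nhds (Icc_mem_nhds hu.1 hu.2),
    (hd.hasDerivAt.add (hasDerivAt_id u)).deriv] at hnonpos
  linarith

theorem downProb_eq_neg_inv_deriv (hV : IsVTransform V δ) {v : ℝ} (hv : v ∈ Ioo (0 : ℝ) 1) :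
    downProb V δ v = -(deriv V (partialInverse V v))⁻¹ := by
  have hp := hV.partialInverse_mem_Ioo hv
  rw [downProb, derivWithin_of_mem_nhds (Icc_mem_nhds hp.1 hp.2), neg_div, one_div]

theorem downProb_mem_Icc (hV : IsVTransform V δ) {v : ℝ} (hv : v ∈ Ioo (0 : ℝ) 1)
    (hd : DifferentiableAt ℝ V (partialInverse V v)) : downProb V δ v ∈ Icc (0 : ℝ) 1 := by
  have hderiv := hV.deriv_le_neg_one (hV.partialInverse_mem_Ioo hv) hd
  rw [hV.downProb_eq_neg_inv_deriv hv, ← inv_neg]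
  exact ⟨inv_nonneg.2 (by linarith), inv_le_one_of_one_le₀ (by linarith)⟩

theorem hasDerivAt_partialInverse (hV : IsVTransform V δ) {v : ℝ} (hv : v ∈ Ioo (0 : ℝ) 1)
    (hd : DifferentiableAt ℝ V (partialInverse V v)) :
    HasDerivAt (partialInverse V) (-downProb V δ v) v := by
  have hIcc : Icc (0 : ℝ) 1 ∈ nhds v := Icc_mem_nhds hv.1 hv.2
  have hderiv := hV.deriv_le_neg_one (hV.partialInverse_mem_Ioo hv) hd
  rw [hV.downProb_eq_neg_inv_deriv hv, neg_neg]
  exact hd.hasDerivAt.of_local_left_inverse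
    (hV.lipschitzOnWith_partialInverse.continuousOn.continuousAt hIcc) (by linarith)
    (Filter.mem_of_superset hIcc hV.rightInvOn_partialInverse)

theorem aemeasurable_partialInverse (hV : IsVTransform V δ) :
    AEMeasurable (partialInverse V) (volume.restrict (Icc 0 1)) :=
  hV.lipschitzOnWith_partialInverse.continuousOn.aemeasurable measurableSet_Icc

theorem ae_downProb_mem_Icc (hV : IsVTransform V δ)
    (hdiff : ∀ᵐ v ∂volume.restrict (Icc (0 : ℝ) 1), DifferentiableAt ℝ V (partialInverse V v)) :
    ∀ᵐ v ∂volume.restrict (Icc (0 : ℝ) 1), downProb V δ v ∈ Icc (0 : ℝ) 1 := by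
  rw [← restrict_Ioo_eq_restrict_Icc] at hdiff ⊢
  filter_upwards [hdiff, ae_restrict_mem measurableSet_Ioo] with v hd hv
  exact hV.downProb_mem_Icc hv hd

theorem ae_hasDerivAt_partialInverse (hV : IsVTransform V δ)
    (hdiff : ∀ᵐ v ∂volume.restrict (Icc (0 : ℝ) 1), DifferentiableAt ℝ V (partialInverse V v)) :
    ∀ᵐ v ∂volume.restrict (Icc (0 : ℝ) 1),
      HasDerivAt (partialInverse V) (-downProb V δ v) v := by
  rw [← restrict_Ioo_eq_restrict_Icc] at hdiff ⊢
  filter_upwards [hdiff, ae_restrict_mem measurableSet_Ioo] with v hd hv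
  exact hV.hasDerivAt_partialInverse hv hd

theorem aemeasurable_downProb (hV : IsVTransform V δ)
    (hdiff : ∀ᵐ v ∂volume.restrict (Icc (0 : ℝ) 1), DifferentiableAt ℝ V (partialInverse V v)) :
    AEMeasurable (downProb V δ) (volume.restrict (Icc 0 1)) := by
  refine (measurable_deriv (partialInverse V)).neg.aemeasurable.congr ?_
  filter_upwards [hV.ae_hasDerivAt_partialInverse hdiff] with v hv
  rw [Pi.neg_apply, hv.deriv, neg_neg]

theorem map_partialInverse_withDensity_le (hV : IsVTransform V δ)
    (hdiff : ∀ᵐ v ∂volume.restrict (Icc (0 : ℝ) 1), DifferentiableAt ℝ V (partialInverse V v)) :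
    ((volume.restrict (Icc 0 1)).withDensity fun v ↦ ENNReal.ofReal (downProb V δ v)).map
        (partialInverse V) ≤ volume.restrict (Icc 0 δ) := by
  have hdensity : (fun v ↦ ENNReal.ofReal (downProb V δ v)) =ᵐ[volume.restrict (Icc 0 1)]
      fun v ↦ ENNReal.ofReal |-downProb V δ v| := by
    filter_upwards [hV.ae_downProb_mem_Icc hdiff] with v hv
    rw [abs_neg, abs_of_nonneg hv.1]
  rw [withDensity_congr_ae hdensity]
  exact map_withDensity_abs_deriv_le measurableSet_Icc.nullMeasurableSet
    ((hV.ae_hasDerivAt_partialInverse hdiff).mono fun v hv ↦ hv.hasDerivWithinAt)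
    hV.strictAntiOn_partialInverse.injOn hV.mapsTo_partialInverse

theorem map_add_partialInverse_withDensity_le (hV : IsVTransform V δ)
    (hdiff : ∀ᵐ v ∂volume.restrict (Icc (0 : ℝ) 1), DifferentiableAt ℝ V (partialInverse V v)) :
    ((volume.restrict (Icc 0 1)).withDensity fun v ↦ ENNReal.ofReal (1 - downProb V δ v)).map
        (fun v ↦ v + partialInverse V v) ≤ volume.restrict (Icc δ 1) := by
  have hdensity : (fun v ↦ ENNReal.ofReal (1 - downProb V δ v)) =ᵐ[volume.restrict (Icc 0 1)]
      fun v ↦ ENNReal.ofReal |1 + -downProb V δ v| := by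
    filter_upwards [hV.ae_downProb_mem_Icc hdiff] with v hv
    rw [← sub_eq_add_neg, abs_of_nonneg (sub_nonneg.2 hv.2)]
  rw [withDensity_congr_ae hdensity]
  exact map_withDensity_abs_deriv_le measurableSet_Icc.nullMeasurableSet
    ((hV.ae_hasDerivAt_partialInverse hdiff).mono fun v hv ↦
      ((hasDerivAt_id v).add hv).hasDerivWithinAt)
    hV.strictMonoOn_add_partialInverse.injOn hV.mapsTo_add_partialInverse

theorem aemeasurable_stochInv (hV : IsVTransform V δ)
    (hdiff : ∀ᵐ v ∂volume.restrict (Icc (0 : ℝ) 1), DifferentiableAt ℝ V (partialInverse V v)) :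
    AEMeasurable (fun z : ℝ × ℝ ↦ stochInv V δ z.1 z.2)
      ((volume.restrict (Icc 0 1)).prod (volume.restrict (Icc 0 1))) :=
  aemeasurable_prod_ite_le (hV.aemeasurable_downProb hdiff) hV.aemeasurable_partialInverse
    (aemeasurable_id.add hV.aemeasurable_partialInverse)

theorem map_stochInv_prod (hV : IsVTransform V δ)
    (hdiff : ∀ᵐ v ∂volume.restrict (Icc (0 : ℝ) 1), DifferentiableAt ℝ V (partialInverse V v)) :
    ((volume.restrict (Icc 0 1)).prod (volume.restrict (Icc 0 1))).map
        (fun z ↦ stochInv V δ z.1 z.2) = volume.restrict (Icc 0 1) := by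
  have : IsProbabilityMeasure (volume.restrict (Icc (0 : ℝ) 1)) := ⟨by simp⟩
  have := Measure.isProbabilityMeasure_map (hV.aemeasurable_stochInv hdiff)
  refine Measure.eq_of_le_of_isProbabilityMeasure ?_
  calc
    _ = ((volume.restrict (Icc 0 1)).withDensity fun v ↦ ENNReal.ofReal (downProb V δ v)).map
          (partialInverse V) +
        ((volume.restrict (Icc 0 1)).withDensity fun v ↦ ENNReal.ofReal (1 - downProb V δ v)).map
          (fun v ↦ v + partialInverse V v) :=
      map_prod_ite_le (hV.aemeasurable_downProb hdiff) (hV.ae_downProb_mem_Icc hdiff)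
        hV.aemeasurable_partialInverse (aemeasurable_id.add hV.aemeasurable_partialInverse)
    _ ≤ volume.restrict (Icc 0 δ) + volume.restrict (Icc δ 1) :=
      add_le_add (hV.map_partialInverse_withDensity_le hdiff)
        (hV.map_add_partialInverse_withDensity_le hdiff)
    _ = volume.restrict (Icc 0 1) :=
      restrict_Icc_add_restrict_Icc volume hV.fulcrum_mem.1.le hV.fulcrum_mem.2.le

theorem ae_differentiableAt_partialInverse (hV : IsVTransform V δ)
    (hdiff : DifferentiableOn ℝ V (Ioo 0 δ)) :
    ∀ᵐ v ∂volume.restrict (Icc (0 : ℝ) 1), DifferentiableAt ℝ V (partialInverse V v) := by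
  rw [← restrict_Ioo_eq_restrict_Icc]
  filter_upwards [ae_restrict_mem measurableSet_Ioo] with v hv
  exact hdiff.differentiableAt (isOpen_Ioo.mem_nhds (hV.partialInverse_mem_Ioo hv))

end IsVTransform

theorem stochInv_uniform_general {Ω : Type*} [MeasurableSpace Ω]
    (μ : Measure Ω) [IsFiniteMeasure μ] (V : ℝ → ℝ) (δ : ℝ) (hV : IsVTransform V δ)
    (hdiff : ∀ᵐ v ∂volume.restrict (Icc (0 : ℝ) 1), DifferentiableAt ℝ V (partialInverse V v))
    (Vr Wr : Ω → ℝ) (hVr : AEMeasurable Vr μ) (hWr : AEMeasurable Wr μ)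
    (hVunif : μ.map Vr = volume.restrict (Icc 0 1))
    (hWunif : μ.map Wr = volume.restrict (Icc 0 1))
    (hindep : IndepFun Vr Wr μ) :
    μ.map (fun ω ↦ stochInv V δ (Vr ω) (Wr ω)) = volume.restrict (Icc 0 1) := by
  have hjoint : μ.map (fun ω ↦ (Vr ω, Wr ω)) =
      (volume.restrict (Icc 0 1)).prod (volume.restrict (Icc 0 1)) := by
    rw [hindep.map_prod_eq_prod_map_map hVr hWr, hVunif, hWunif]
  have hmeas : AEMeasurable (fun z : ℝ × ℝ ↦ stochInv V δ z.1 z.2)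
      (μ.map fun ω ↦ (Vr ω, Wr ω)) := hjoint ▸ hV.aemeasurable_stochInv hdiff
  rw [← hV.map_stochInv_prod hdiff, ← hjoint, AEMeasurable.map_map_of_aemeasurable hmeas
    (hVr.prodMk hWr)]
  rfl

/-- if `V` and `W` are independent uniform random variables on
`[0,1]`, then the stochastic inversion `U = 𝒱⁻¹(V,W)` is uniformly distributed
on `[0,1]`. -/
theorem stochInv_uniform {Ω : Type*} [MeasurableSpace Ω]
    (μ : Measure Ω) [IsProbabilityMeasure μ]
    (V : ℝ → ℝ) (δ : ℝ) (hV : IsVTransform V δ)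
    (hdiff : ∀ u ∈ Set.Icc (0:ℝ) 1, u ≠ δ →
      DifferentiableWithinAt ℝ V (Set.Icc 0 1) u)
    (hΔmeas : Measurable (downProb V δ))
    (hΔrange : ∀ v ∈ Set.Icc (0:ℝ) 1, downProb V δ v ∈ Set.Icc (0:ℝ) 1)
    (Vr Wr : Ω → ℝ) (hVr : Measurable Vr) (hWr : Measurable Wr)
    (hVunif : Measure.map Vr μ = volume.restrict (Set.Icc 0 1))
    (hWunif : Measure.map Wr μ = volume.restrict (Set.Icc 0 1))
    (hindep : IndepFun Vr Wr μ) :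
    Measure.map (fun ω => stochInv V δ (Vr ω) (Wr ω)) μ
      = volume.restrict (Set.Icc 0 1) := by
  have hdown : DifferentiableOn ℝ V (Ioo 0 δ) := fun u hu ↦
    (hdiff u (hV.Icc_zero_fulcrum_subset (Ioo_subset_Icc_self hu)) hu.2.ne).mono
      (Ioo_subset_Icc_self.trans hV.Icc_zero_fulcrum_subset)
  exact stochInv_uniform_general μ V δ hV (hV.ae_differentiableAt_partialInverse hdown) Vr Wr
    hVr.aemeasurable hWr.aemeasurable hVunif hWunif hindep
end

section
/- Let 𝒱 be a v-transform with fulcrum δ, differentiable at every point of [0,1] except δ, with conditional down probability Δ and stochastic inversion function 𝒱⁻¹(v,w). Let (V₁,W₁),…,(V_d,W_d) be pairs of uniform [0,1] random variables such that V_i is independent of W_i for each i, and suppose the joint law of (V₁,…,V_d,W₁,…,W_d) has a density c_{V,W} with respect to Lebesgue measure on [0,1]^{2d}. Define δ(u) = Δ(𝒱(u)), I_{δ,u}(x) = [0,x] if u ≤ δ and [x,1] if u > δ, and p_{δ,u}(x) = x if u ≤ δ and 1−x if u > δ. Then the random vector U = (U₁,…,U_d) with U_i = 𝒱⁻¹(V_i,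 W_i) has joint density c_U(u₁,…,u_d) = [∫_{I_{δ,u₁}(δ(u₁))} ⋯ ∫_{I_{δ,u_d}(δ(u_d))} c_{V,W}(𝒱(u₁),…,𝒱(u_d), z₁,…,z_d) dz₁⋯dz_d] / ∏_{i=1}^d p_{δ,u_i}(δ(u_i)) with respect to Lebesgue measure on [0,1]^d. -/
open Set MeasureTheory ProbabilityTheory

/-!
The map `(v, w) ↦ (𝒱⁻¹(v, w), w)` has the left inverse `(u, z) ↦ (𝒱(u), z)`. The square property
makes `1 / |𝒱′(u)|` equal to `Δ(𝒱(u))` on the left branch and to `1 - Δ(𝒱(u))` on the right branch,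
so a change of variables on each branch shows that the uniform law on the unit square is mapped to
the law with density `k(u, z) = 𝟙{z ∈ I_{δ,u}(δ(u))} / p_{δ,u}(δ(u))`. This holds for each
coordinate of the product of the uniform laws, hence a joint density `c` of `(V, W)` becomes the
density `c(𝒱(u₁), …, 𝒱(u_d), z) ∏ᵢ k(uᵢ, zᵢ)` of `(U, W)`, and integrating out `z` gives the claim.
-/

section DerivWithin

variable {F : Type*} [NormedAddCommGroup F] [NormedSpace ℝ F] [CompleteSpace F]
  [MeasurableSpace F] [BorelSpace F]

theorem measurable_derivWithin_Icc (f : ℝ → F) (a b : ℝ) :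
    Measurable (derivWithin f (Icc a b)) := by
  refine ((measurable_deriv f).indicator (measurableSet_Icc (a := a) (b := b))
    ).measurable_of_countable_ne ((Set.toFinite {a, b}).countable.mono fun x hx => ?_)
  by_contra hab
  simp only [mem_insert_iff, mem_singleton_iff, not_or] at hab
  refine hx ?_
  by_cases hmem : x ∈ Icc a b
  · have hnhds := Icc_mem_nhds (lt_of_le_of_ne hmem.1 (Ne.symm hab.1))
      (lt_of_le_of_ne hmem.2 hab.2)
    rw [indicator_of_mem hmem, derivWithin_of_mem_nhds hnhds]
  · rw [indicator_of_notMem hmem,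
      derivWithin_zero_of_notMem_closure (by rwa [isClosed_Icc.closure_eq])]

end DerivWithin

section WithDensity

variable {α β : Type*} [MeasurableSpace α] [MeasurableSpace β]

theorem map_withDensity_comp {μ : Measure α} {T : α → β} (hT : Measurable T)
    {f : β → ENNReal} (hf : AEMeasurable f (μ.map T)) :
    (μ.withDensity (f ∘ T)).map T = (μ.map T).withDensity f := by
  ext s hs
  rw [Measure.map_apply hT hs, withDensity_apply _ (hT hs), withDensity_apply _ hs,
    Measure.restrict_map hT hs]
  refine (lintegral_map' ?_ hT.aemeasurable).symm
  rw [← Measure.restrict_map hT hs]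
  exact hf.restrict

theorem map_fst_withDensity_prod {μ : Measure α} {ν : Measure β} [SFinite μ] [SFinite ν]
    {f : α × β → ENNReal} (hf : AEMeasurable f (μ.prod ν)) :
    ((μ.prod ν).withDensity f).map Prod.fst = μ.withDensity fun x => ∫⁻ y, f (x, y) ∂ν := by
  ext s hs
  rw [Measure.map_apply measurable_fst hs, withDensity_apply _ (measurable_fst hs),
    withDensity_apply _ hs, ← prod_univ, ← Measure.prod_restrict, Measure.restrict_univ,
    lintegral_prod _ (hf.mono_measure (Measure.prod_mono Measure.restrict_le_self le_rfl))]

theorem ae_mem_of_map_eq_restrict {μ : Measure α} {ρ : Measure β} {f : α → β} {s : Set β}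
    (hf : AEMeasurable f μ) (hs : MeasurableSet s) (hmap : μ.map f = ρ.restrict s) :
    ∀ᵐ x ∂μ, f x ∈ s :=
  ae_of_ae_map hf (hmap ▸ ae_restrict_mem hs)

theorem map_eq_restrict_withDensity {μ : Measure α} {ρ : Measure β} {Z : α → β}
    {s : Set β} {f : β → ENNReal} (hZ : AEMeasurable Z μ) (hs : MeasurableSet s)
    (hmem : ∀ᵐ x ∂μ, Z x ∈ s) (hmap : μ.map Z = ρ.withDensity f) :
    μ.map Z = (ρ.restrict s).withDensity f := by
  rw [← restrict_withDensity hs, ← hmap,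
    Measure.restrict_eq_self_of_ae_mem ((ae_map_iff hZ hs).mpr hmem)]

end WithDensity

section Pi

variable {ι : Type*} {E : ι → Type*} [∀ i, MeasurableSpace (E i)]
  {ν : ∀ i, Measure (E i)} [∀ i, SigmaFinite (ν i)]

theorem lmarginal_finset_prod [DecidableEq ι] {f : ∀ i, E i → ENNReal}
    (hf : ∀ i, Measurable (f i)) (s : Finset ι) :
    ∫⋯∫⁻_s, (fun x => ∏ i ∈ s, f i (x i)) ∂ν = fun _ => ∏ i ∈ s, ∫⁻ y, f i y ∂ν i := by
  induction s using Finset.induction_on with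
  | empty => simp only [Finset.prod_empty, lmarginal_empty]
  | insert i s his ih =>
    have hpeel (x : ∀ i, E i) : ∫⁻ y, ∏ j ∈ insert i s, f j (Function.update x i y j) ∂ν i
        = (∫⁻ y, f i y ∂ν i) * ∏ j ∈ s, f j (x j) := by
      rw [← lintegral_mul_const _ (hf i)]
      refine lintegral_congr fun y => ?_
      rw [Finset.prod_insert his, Function.update_self]
      congr 1
      exact Finset.prod_congr rfl fun j hj =>
        by rw [Function.update_of_ne (ne_of_mem_of_not_mem hj his)]
    rw [lmarginal_insert' _ (by fun_prop) his, funext hpeel]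
    ext x
    have hrest : Measurable fun y : ∀ i : s, E i =>
        ∏ j ∈ s, f j (Function.updateFinset x s y j) :=
      Finset.measurable_prod _ fun j _ =>
        (hf j).comp ((measurable_pi_apply j).comp measurable_updateFinset)
    rw [lmarginal, lintegral_const_mul _ hrest, Finset.prod_insert his, ← congrFun ih x, lmarginal]

variable [Fintype ι]

theorem lintegral_pi_prod {f : ∀ i, E i → ENNReal} (hf : ∀ i, Measurable (f i)) :
    ∫⁻ x, ∏ i, f i (x i) ∂Measure.pi ν = ∏ i, ∫⁻ y, f i y ∂ν i := by
  classical
  rcases isEmpty_or_nonempty (∀ i, E i) with hE | ⟨⟨x⟩⟩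
  · obtain ⟨i, hi⟩ := isEmpty_pi.mp hE
    rw [lintegral_of_isEmpty, Finset.prod_eq_zero (Finset.mem_univ i) (lintegral_of_isEmpty _ _)]
  · rw [lintegral_eq_lmarginal_univ x, lmarginal_finset_prod hf]

theorem pi_withDensity {f : ∀ i, E i → ENNReal} [∀ i, SigmaFinite ((ν i).withDensity (f i))]
    (hf : ∀ i, AEMeasurable (f i) (ν i)) :
    Measure.pi (fun i => (ν i).withDensity (f i))
      = (Measure.pi ν).withDensity fun x => ∏ i, f i (x i) := by
  have hprod : (fun x : ∀ i, E i => ∏ i, f i (x i)) =ᵐ[Measure.pi ν]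
      fun x => ∏ i, (hf i).mk (f i) (x i) := by
    have hmk (i) : ∀ᵐ x ∂Measure.pi ν, f i (x i) = (hf i).mk (f i) (x i) :=
      (Measure.tendsto_eval_ae_ae (μ := ν)).eventually (hf i).ae_eq_mk
    filter_upwards [ae_all_iff.mpr hmk] with x hx using Finset.prod_congr rfl fun i _ => hx i
  refine Measure.pi_eq fun s hs => ?_
  rw [withDensity_congr_ae hprod, withDensity_apply _ (MeasurableSet.univ_pi hs),
    Measure.restrict_pi_pi, lintegral_pi_prod fun i => (hf i).measurable_mk]
  refine Finset.prod_congr rfl fun i _ => ?_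
  rw [withDensity_congr_ae (hf i).ae_eq_mk, withDensity_apply _ (hs i)]

end Pi

section PiProd

variable {ι : Type*} [Fintype ι] {α β α' β' : Type*} [MeasurableSpace α] [MeasurableSpace β]
  [MeasurableSpace α'] [MeasurableSpace β'] {μ : ι → Measure α} {ν : ι → Measure β}
  {μ' : ι → Measure α'} {ν' : ι → Measure β'} [∀ i, SigmaFinite (μ i)] [∀ i, SigmaFinite (ν i)]
  [∀ i, SigmaFinite (μ' i)] [∀ i, SigmaFinite (ν' i)]

theorem map_pi_prod_pi_eq_withDensity {T : ι → α × β → α' × β'} (hT : ∀ i, Measurable (T i))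
    {k : ι → α' × β' → ENNReal} (hk : ∀ i, AEMeasurable (k i) ((μ' i).prod (ν' i)))
    [∀ i, SigmaFinite (((μ' i).prod (ν' i)).withDensity (k i))]
    (h : ∀ i, ((μ i).prod (ν i)).map (T i) = ((μ' i).prod (ν' i)).withDensity (k i)) :
    ((Measure.pi μ).prod (Measure.pi ν)).map
        (fun x => (fun i => (T i (x.1 i, x.2 i)).1, fun i => (T i (x.1 i, x.2 i)).2))
      = ((Measure.pi μ').prod (Measure.pi ν')).withDensity fun x => ∏ i, k i (x.1 i, x.2 i) := by
  have hsigma (i) : SigmaFinite (((μ i).prod (ν i)).map (T i)) := h i ▸ inferInstance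
  let e' := MeasurableEquiv.arrowProdEquivProdArrow α' β' ι
  have he := measurePreserving_arrowProdEquivProdArrow α β ι μ ν
  have he' := measurePreserving_arrowProdEquivProdArrow α' β' ι μ' ν'
  have hprod : AEMeasurable (fun x : ι → α' × β' => ∏ i, k i (x i))
      (Measure.pi fun i => (μ' i).prod (ν' i)) :=
    Finset.aemeasurable_fun_prod _ fun i _ =>
      (hk i).comp_quasiMeasurePreserving (Measure.quasiMeasurePreserving_eval _ i)
  rw [← he.map_eq, Measure.map_map (by fun_prop) he.measurable]
  change Measure.map (e' ∘ fun (x : ι → α × β) i => T i (x i)) _ = _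
  rw [← Measure.map_map e'.measurable (by fun_prop),
    Measure.pi_map_pi fun i => (hT i).aemeasurable, funext h, pi_withDensity hk, ← he'.map_eq]
  exact map_withDensity_comp (f := fun x => ∏ i, k i (x.1 i, x.2 i)) he'.measurable
    (e'.measurableEmbedding.aemeasurable_map_iff.mpr hprod)

end PiProd

section ChangeOfVariables

theorem setLIntegral_Icc_eq_add_Ioo {a b c : ℝ} (hab : a ≤ b) (hbc : b ≤ c) (f : ℝ → ENNReal) :
    ∫⁻ x in Icc a c, f x = (∫⁻ x in Ioo a b, f x) + ∫⁻ x in Ioo b c, f x := by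
  simp only [Measure.restrict_congr_set Ioc_ae_eq_Icc.symm,
    Measure.restrict_congr_set Ioo_ae_eq_Ioc, ← Ioc_union_Ioc_eq_Ioc hab hbc,
    lintegral_union measurableSet_Ioc (Ioc_disjoint_Ioc_of_le le_rfl)]

theorem setLIntegral_comp_prodMk_of_leftInverse {β : Type*} [MeasurableSpace β] {ν : Measure β}
    [SFinite ν] {f f' : ℝ → ℝ} {s : Set ℝ} {B : Set (ℝ × β)} {S : ℝ × β → ℝ}
    {F : ℝ × β → ENNReal} (hs : MeasurableSet s) (hB : MeasurableSet B) (hS : Measurable S)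
    (hF : Measurable F) (hf' : ∀ u ∈ s, HasDerivWithinAt f (f' u) s u)
    (hinv : ∀ u ∈ s, ∀ w, (f u, w) ∈ B → S (f u, w) = u) (hinj : InjOn f s) :
    ∫⁻ x in B, F (S x, x.2) ∂(volume.restrict (f '' s)).prod ν
      = ∫⁻ u in s, ∫⁻ w in {w | (f u, w) ∈ B}, ENNReal.ofReal |f' u| * F (u, w) ∂ν := by
  have hcomp : Measurable (B.indicator fun x => F (S x, x.2)) :=
    (hF.comp (hS.prodMk measurable_snd)).indicator hB
  rw [← lintegral_indicator hB, lintegral_prod _ hcomp.aemeasurable,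
    lintegral_image_eq_lintegral_abs_deriv_mul hs hf' hinj]
  refine setLIntegral_congr_fun hs fun u hu => ?_
  have hfibre : MeasurableSet {w | (f u, w) ∈ B} := measurable_prodMk_left hB
  rw [lintegral_const_mul _ (by fun_prop), ← lintegral_indicator hfibre]
  congr 1
  refine lintegral_congr fun w => ?_
  by_cases hw : (f u, w) ∈ B
  · rw [indicator_of_mem hw, indicator_of_mem (by exact hw), hinv u hu w hw]
  · rw [indicator_of_notMem hw, indicator_of_notMem (by exact hw)]

end ChangeOfVariables

namespace IsVTransform

variable {V : ℝ → ℝ} {δ u v w : ℝ}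

theorem dual_of_mem_left (hV : IsVTransform V δ) (hu : u ∈ Icc 0 δ) :
    u + V u ∈ Icc δ 1 ∧ V (u + V u) = V u := by
  have hδ := hV.fulcrum_mem
  rcases hu.2.eq_or_lt with rfl | huδ
  · simpa only [hV.map_fulcrum, add_zero, and_true] using left_mem_Icc.mpr hδ.2.le
  · obtain ⟨u', hu', ⟨-, hδu'⟩ | ⟨-, hδu⟩, happly, hdist⟩ :=
      hV.square u ⟨hu.1, huδ.le.trans hδ.2.le⟩ huδ.ne
    · obtain rfl : u' = u + V u := by
        rw [← hdist, abs_of_pos (by linarith)]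
        ring
      exact ⟨⟨hδu'.le, hu'.2⟩, happly⟩
    · exact absurd hδu huδ.not_gt

theorem dual_of_mem_right (hV : IsVTransform V δ) (hu : u ∈ Icc δ 1) :
    u - V u ∈ Icc 0 δ ∧ V (u - V u) = V u := by
  have hδ := hV.fulcrum_mem
  rcases hu.1.eq_or_lt with rfl | hδu
  · simpa only [hV.map_fulcrum, sub_zero, and_true] using right_mem_Icc.mpr hδ.1.le
  · obtain ⟨u', hu', ⟨huδ, -⟩ | ⟨hu'δ, -⟩, happly, hdist⟩ :=
      hV.square u ⟨hδ.1.le.trans hδu.le, hu.2⟩ hδu.ne'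
    · exact absurd hδu huδ.not_gt
    · obtain rfl : u' = u - V u := by
        rw [← hdist, abs_of_neg (by linarith)]
        ring
      exact ⟨⟨hu'.1, hu'δ.le⟩, happly⟩

theorem image_Ioo_left (hV : IsVTransform V δ) : V '' Ioo 0 δ = Ioo 0 1 := by
  have hδ := hV.fulcrum_mem
  rw [(hV.contOn.mono (Icc_subset_Icc_right hδ.2.le)).image_Ioo_of_strictAntiOn hδ.1.le
    hV.strictAntiOn, hV.map_zero, hV.map_fulcrum]

theorem image_Ioo_right (hV : IsVTransform V δ) : V '' Ioo δ 1 = Ioo 0 1 := by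
  have hδ := hV.fulcrum_mem
  rw [(hV.contOn.mono (Icc_subset_Icc_left hδ.1.le)).image_Ioo_of_strictMonoOn hδ.2.le
    hV.strictMonoOn, hV.map_one, hV.map_fulcrum]

theorem partialInverse_apply_of_mem_left (hV : IsVTransform V δ) (hu : u ∈ Icc 0 δ) :
    partialInverse V (V u) = u := by
  refine IsLeast.csInf_eq ⟨⟨⟨hu.1, hu.2.trans hV.fulcrum_mem.2.le⟩, rfl⟩, fun x hx => ?_⟩
  by_contra! hlt
  exact (hV.strictAntiOn ⟨hx.1.1, hlt.le.trans hu.2⟩ hu hlt).ne' hx.2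

theorem partialInverse_apply_of_mem_right (hV : IsVTransform V δ) (hu : u ∈ Icc δ 1) :
    partialInverse V (V u) = u - V u := by
  obtain ⟨hmem, happly⟩ := hV.dual_of_mem_right hu
  rw [← happly, hV.partialInverse_apply_of_mem_left hmem, happly]

theorem partialInverse_mem_and_apply (hV : IsVTransform V δ) (hv : v ∈ Icc (0 : ℝ) 1) :
    partialInverse V v ∈ Icc 0 δ ∧ V (partialInverse V v) = v := by
  have hδ := hV.fulcrum_mem
  have himage := intermediate_value_Icc' hδ.1.le (hV.contOn.mono (Icc_subset_Icc_right hδ.2.le))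
  rw [hV.map_zero, hV.map_fulcrum] at himage
  obtain ⟨u, hu, rfl⟩ := himage hv
  rw [hV.partialInverse_apply_of_mem_left hu]
  exact ⟨hu, rfl⟩

theorem partialInverse_of_notMem (hV : IsVTransform V δ) (hv : v ∉ Icc (0 : ℝ) 1) :
    partialInverse V v = 0 := by
  have hempty : {u | u ∈ Icc (0 : ℝ) 1 ∧ V u = v} = ∅ :=
    eq_empty_of_forall_notMem fun u hu => hv (hu.2 ▸ hV.mapsTo u hu.1)
  rw [partialInverse, hempty, Real.sInf_empty]

theorem antitoneOn_partialInverse (hV : IsVTransform V δ) :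
    AntitoneOn (partialInverse V) (Icc 0 1) := by
  intro v hv w hw hvw
  obtain ⟨hpv, hVv⟩ := hV.partialInverse_mem_and_apply hv
  obtain ⟨hpw, hVw⟩ := hV.partialInverse_mem_and_apply hw
  rwa [← hV.strictAntiOn.le_iff_ge hpv hpw, hVv, hVw]

theorem measurable_partialInverse (hV : IsVTransform V δ) : Measurable (partialInverse V) := by
  refine measurable_of_restrict_of_restrict_compl measurableSet_Icc
    (antitoneOn_iff_antitone.mp hV.antitoneOn_partialInverse).measurable ?_
  rw [show (Icc 0 1)ᶜ.domRestrict (partialInverse V) = fun _ => 0 from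
    funext fun v => hV.partialInverse_of_notMem v.2]
  exact measurable_const

theorem measurable_downProb (hV : IsVTransform V δ) : Measurable (downProb V δ) :=
  measurable_const.div ((measurable_derivWithin_Icc V 0 δ).comp hV.measurable_partialInverse)

theorem measurableSet_le_downProb (hV : IsVTransform V δ) :
    MeasurableSet {x : ℝ × ℝ | x.2 ≤ downProb V δ x.1} :=
  measurableSet_le measurable_snd (hV.measurable_downProb.comp measurable_fst)

theorem measurable_stochInv (hV : IsVTransform V δ) :
    Measurable fun x : ℝ × ℝ => stochInv V δ x.1 x.2 :=
  have hleft := hV.measurable_partialInverse.comp measurable_fst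
  Measurable.ite hV.measurableSet_le_downProb hleft (measurable_fst.add hleft)

theorem apply_stochInv (hV : IsVTransform V δ) (hv : v ∈ Icc (0 : ℝ) 1) (w : ℝ) :
    V (stochInv V δ v w) = v := by
  obtain ⟨hmem, happly⟩ := hV.partialInverse_mem_and_apply hv
  unfold stochInv
  split_ifs
  · exact happly
  · simpa only [happly, add_comm] using (hV.dual_of_mem_left hmem).2

theorem stochInv_apply_of_mem_left (hV : IsVTransform V δ) (hu : u ∈ Icc 0 δ)
    (hw : w ≤ downProb V δ (V u)) : stochInv V δ (V u) w = u := by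
  rw [stochInv, if_pos hw, hV.partialInverse_apply_of_mem_left hu]

theorem stochInv_apply_of_mem_right (hV : IsVTransform V δ) (hu : u ∈ Icc δ 1)
    (hw : downProb V δ (V u) < w) : stochInv V δ (V u) w = u := by
  rw [stochInv, if_neg hw.not_ge, hV.partialInverse_apply_of_mem_right hu, add_sub_cancel]

theorem add_apply_mem_Ioo (hV : IsVTransform V δ) (hu : u ∈ Ioo 0 δ) : u + V u ∈ Ioo δ 1 := by
  obtain ⟨hmem, happly⟩ := hV.dual_of_mem_left (Ioo_subset_Icc_self hu)
  obtain ⟨hpos, hlt⟩ := hV.image_Ioo_left ▸ mem_image_of_mem V hu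
  refine ⟨hmem.1.lt_of_ne fun h => hpos.ne' ?_, hmem.2.lt_of_ne fun h => hlt.ne ?_⟩
  · rw [← happly, ← h, hV.map_fulcrum]
  · rw [← happly, h, hV.map_one]

theorem sub_apply_mem_Ioo (hV : IsVTransform V δ) (hu : u ∈ Ioo δ 1) : u - V u ∈ Ioo 0 δ := by
  obtain ⟨hmem, happly⟩ := hV.dual_of_mem_right (Ioo_subset_Icc_self hu)
  obtain ⟨hpos, hlt⟩ := hV.image_Ioo_right ▸ mem_image_of_mem V hu
  refine ⟨hmem.1.lt_of_ne fun h => hlt.ne ?_, hmem.2.lt_of_ne fun h => hpos.ne' ?_⟩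
  · rw [← happly, ← h, hV.map_zero]
  · rw [← happly, h, hV.map_fulcrum]

theorem antitoneOn_add_apply (hV : IsVTransform V δ) :
    AntitoneOn (fun x => x + V x) (Icc 0 δ) := by
  intro x hx y hy hxy
  obtain ⟨hx', hVx⟩ := hV.dual_of_mem_left hx
  obtain ⟨hy', hVy⟩ := hV.dual_of_mem_left hy
  rw [← hV.strictMonoOn.le_iff_le hy' hx', hVx, hVy]
  exact hV.strictAntiOn.antitoneOn hx hy hxy

theorem aemeasurable (hV : IsVTransform V δ) : AEMeasurable V (volume.restrict (Icc 0 1)) :=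
  hV.contOn.aemeasurable measurableSet_Icc

theorem hasDerivAt_of_mem_left (hV : IsVTransform V δ)
    (hdiff : DifferentiableOn ℝ V (Ioo 0 1 \ {δ})) (hu : u ∈ Ioo 0 δ) :
    HasDerivAt V (deriv V u) u :=
  (hdiff.differentiableAt ((isOpen_Ioo.sdiff isClosed_singleton).mem_nhds
    ⟨⟨hu.1, hu.2.trans hV.fulcrum_mem.2⟩, hu.2.ne⟩)).hasDerivAt

theorem hasDerivAt_of_mem_right (hV : IsVTransform V δ)
    (hdiff : DifferentiableOn ℝ V (Ioo 0 1 \ {δ})) (hu : u ∈ Ioo δ 1) :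
    HasDerivAt V (deriv V u) u :=
  (hdiff.differentiableAt ((isOpen_Ioo.sdiff isClosed_singleton).mem_nhds
    ⟨⟨hV.fulcrum_mem.1.trans hu.1, hu.2⟩, hu.1.ne'⟩)).hasDerivAt

theorem deriv_add_apply_mul (hV : IsVTransform V δ)
    (hdiff : DifferentiableOn ℝ V (Ioo 0 1 \ {δ})) (hu : u ∈ Ioo 0 δ) :
    deriv V (u + V u) * (1 + deriv V u) = deriv V u := by
  have hderiv := hV.hasDerivAt_of_mem_left hdiff hu
  have hdual := hV.hasDerivAt_of_mem_right hdiff (hV.add_apply_mem_Ioo hu)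
  have hcomp : HasDerivAt (fun x => V (x + V x)) (deriv V (u + V u) * (1 + deriv V u)) u :=
    hdual.comp u ((hasDerivAt_id u).add hderiv)
  have heq : V =ᶠ[nhds u] fun x => V (x + V x) := by
    filter_upwards [Icc_mem_nhds hu.1 hu.2] with x hx using (hV.dual_of_mem_left hx).2.symm
  exact (hcomp.congr_of_eventuallyEq heq).unique hderiv

theorem deriv_lt_neg_one (hV : IsVTransform V δ)
    (hdiff : DifferentiableOn ℝ V (Ioo 0 1 \ {δ})) (hu : u ∈ Ioo 0 δ) : deriv V u < -1 := by
  have hsum : HasDerivAt (fun x => x + V x) (1 + deriv V u) u :=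
    (hasDerivAt_id u).add (hV.hasDerivAt_of_mem_left hdiff hu)
  have hle : derivWithin (fun x => x + V x) (Icc 0 δ) u ≤ 0 :=
    hV.antitoneOn_add_apply.derivWithin_nonpos
  rw [derivWithin_of_mem_nhds (Icc_mem_nhds hu.1 hu.2), hsum.deriv] at hle
  refine lt_of_le_of_ne (by linarith) fun h => ?_
  have hmul := hV.deriv_add_apply_mul hdiff hu
  norm_num [h] at hmul

theorem downProb_apply_of_mem_left (hV : IsVTransform V δ) (hu : u ∈ Ioo 0 δ) :
    downProb V δ (V u) = -1 / deriv V u := by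
  rw [downProb, hV.partialInverse_apply_of_mem_left (Ioo_subset_Icc_self hu),
    derivWithin_of_mem_nhds (Icc_mem_nhds hu.1 hu.2)]

theorem downProb_mem_Ioo (hV : IsVTransform V δ) (hdiff : DifferentiableOn ℝ V (Ioo 0 1 \ {δ}))
    (hv : v ∈ Ioo (0 : ℝ) 1) : downProb V δ v ∈ Ioo 0 1 := by
  obtain ⟨u, hu, rfl⟩ := hV.image_Ioo_left ▸ hv
  have hderiv := hV.deriv_lt_neg_one hdiff hu
  rw [hV.downProb_apply_of_mem_left hu]
  exact ⟨div_pos_of_neg_of_neg (by norm_num) (by linarith),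
    (div_lt_one_of_neg (by linarith)).mpr hderiv⟩

theorem abs_deriv_of_mem_left (hV : IsVTransform V δ)
    (hdiff : DifferentiableOn ℝ V (Ioo 0 1 \ {δ})) (hu : u ∈ Ioo 0 δ) :
    |deriv V u| = (downProb V δ (V u))⁻¹ := by
  have hderiv := hV.deriv_lt_neg_one hdiff hu
  rw [hV.downProb_apply_of_mem_left hu, abs_of_neg (by linarith), inv_div, div_neg, div_one]

theorem abs_deriv_of_mem_right (hV : IsVTransform V δ)
    (hdiff : DifferentiableOn ℝ V (Ioo 0 1 \ {δ})) (hu : u ∈ Ioo δ 1) :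
    |deriv V u| = (1 - downProb V δ (V u))⁻¹ := by
  have hmem := hV.sub_apply_mem_Ioo hu
  have happly := (hV.dual_of_mem_right (Ioo_subset_Icc_self hu)).2
  have hlt := hV.deriv_lt_neg_one hdiff hmem
  have hmul := hV.deriv_add_apply_mul hdiff hmem
  rw [happly, sub_add_cancel] at hmul
  have hderiv : deriv V u = deriv V (u - V u) / (1 + deriv V (u - V u)) := by
    rw [eq_div_iff (by linarith), hmul]
  have hpos : 0 < deriv V u := hderiv ▸ div_pos_of_neg_of_neg (by linarith) (by linarith)
  have hne : deriv V (u - V u) ≠ 0 := by linarith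
  rw [abs_of_pos hpos, ← happly, hV.downProb_apply_of_mem_left hmem, hderiv, neg_div,
    sub_neg_eq_add, one_add_div hne, inv_div, add_comm]

end IsVTransform

/-- The interval `I_{δ,u}(x)`. -/
noncomputable def branchInterval (δ u x : ℝ) : Set ℝ :=
  if u ≤ δ then Icc 0 x else Icc x 1

/-- The normalising factor `p_{δ,u}(x)`, which for `x ∈ [0,1]` is the length of
`branchInterval δ u x`. -/
noncomputable def branchProb (δ u x : ℝ) : ℝ :=
  if u ≤ δ then x else 1 - x

/-- The density of the uniform law on `branchInterval δ u x`. At `x = Δ(𝒱(u))` it is the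
conditional density of `W` given `𝒱⁻¹(V, W) = u`, for independent uniform `V` and `W`. -/
noncomputable def branchDensity (δ u x z : ℝ) : ENNReal :=
  (branchInterval δ u x).indicator (fun _ => ENNReal.ofReal (branchProb δ u x)⁻¹) z

theorem measurableSet_branchInterval (δ u x : ℝ) : MeasurableSet (branchInterval δ u x) := by
  unfold branchInterval
  split_ifs <;> exact measurableSet_Icc

theorem measurable_branchDensity (δ : ℝ) :
    Measurable fun p : ℝ × ℝ × ℝ => branchDensity δ p.1 p.2.1 p.2.2 := by
  have hlower : MeasurableSet {p : ℝ × ℝ × ℝ | p.2.2 ∈ Icc 0 p.2.1} := by measurability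
  have hupper : MeasurableSet {p : ℝ × ℝ × ℝ | p.2.2 ∈ Icc p.2.1 1} := by measurability
  have hite : (fun p : ℝ × ℝ × ℝ => branchDensity δ p.1 p.2.1 p.2.2) = fun p =>
      if p.1 ≤ δ then {p | p.2.2 ∈ Icc 0 p.2.1}.indicator (fun p => ENNReal.ofReal p.2.1⁻¹) p
      else {p | p.2.2 ∈ Icc p.2.1 1}.indicator (fun p => ENNReal.ofReal (1 - p.2.1)⁻¹) p := by
    ext p
    unfold branchDensity branchInterval branchProb
    split_ifs <;> rfl
  rw [hite]
  exact Measurable.ite (measurableSet_le measurable_fst measurable_const)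
    (Measurable.indicator (by fun_prop) hlower) (Measurable.indicator (by fun_prop) hupper)

theorem lintegral_branchDensity_mul (δ u x : ℝ) (f : ℝ → ENNReal) :
    ∫⁻ z, branchDensity δ u x z * f z
      = ∫⁻ z in branchInterval δ u x, ENNReal.ofReal (branchProb δ u x)⁻¹ * f z := by
  rw [← lintegral_indicator (measurableSet_branchInterval δ u x)]
  simp only [branchDensity, indicator_mul_left]

namespace IsVTransform

variable {V : ℝ → ℝ} {δ : ℝ}

theorem setLIntegral_stochInv_left (hV : IsVTransform V δ)
    (hdiff : DifferentiableOn ℝ V (Ioo 0 1 \ {δ})) {F : ℝ × ℝ → ENNReal} (hF : Measurable F) :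
    ∫⁻ x in {x | x.2 ≤ downProb V δ x.1}, F (stochInv V δ x.1 x.2, x.2)
        ∂(volume.restrict (Icc 0 1)).prod (volume.restrict (Icc 0 1))
      = ∫⁻ u in Ioo 0 δ, ∫⁻ z, branchDensity δ u (downProb V δ (V u)) z * F (u, z) := by
  rw [← Measure.restrict_congr_set (Ioo_ae_eq_Icc (a := (0 : ℝ)) (b := 1)), ← hV.image_Ioo_left,
    setLIntegral_comp_prodMk_of_leftInverse measurableSet_Ioo hV.measurableSet_le_downProb
      hV.measurable_stochInv hF (fun u hu => (hV.hasDerivAt_of_mem_left hdiff hu).hasDerivWithinAt)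
      (fun u hu w hw => hV.stochInv_apply_of_mem_left (Ioo_subset_Icc_self hu) hw)
      (hV.strictAntiOn.injOn.mono Ioo_subset_Icc_self), hV.image_Ioo_left]
  refine setLIntegral_congr_fun measurableSet_Ioo fun u hu => ?_
  have hΔ := hV.downProb_mem_Ioo hdiff (hV.image_Ioo_left ▸ mem_image_of_mem V hu)
  have hfibre : (Iic (downProb V δ (V u)) ∩ Ioo 0 1 : Set ℝ)
      =ᵐ[volume] Icc 0 (downProb V δ (V u)) := by
    have heq : Iic (downProb V δ (V u)) ∩ Ioo 0 1 = Ioc 0 (downProb V δ (V u)) := by grind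
    rw [heq]
    exact Ioc_ae_eq_Icc
  change ∫⁻ w in Iic (downProb V δ (V u)), _ ∂volume.restrict (Ioo 0 1) = _
  rw [Measure.restrict_restrict measurableSet_Iic, Measure.restrict_congr_set hfibre,
    lintegral_branchDensity_mul, branchInterval, branchProb, if_pos hu.2.le, if_pos hu.2.le,
    hV.abs_deriv_of_mem_left hdiff hu]

theorem setLIntegral_stochInv_right (hV : IsVTransform V δ)
    (hdiff : DifferentiableOn ℝ V (Ioo 0 1 \ {δ})) {F : ℝ × ℝ → ENNReal} (hF : Measurable F) :
    ∫⁻ x in {x | x.2 ≤ downProb V δ x.1}ᶜ, F (stochInv V δ x.1 x.2, x.2)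
        ∂(volume.restrict (Icc 0 1)).prod (volume.restrict (Icc 0 1))
      = ∫⁻ u in Ioo δ 1, ∫⁻ z, branchDensity δ u (downProb V δ (V u)) z * F (u, z) := by
  rw [← Measure.restrict_congr_set (Ioo_ae_eq_Icc (a := (0 : ℝ)) (b := 1)), ← hV.image_Ioo_right,
    setLIntegral_comp_prodMk_of_leftInverse measurableSet_Ioo hV.measurableSet_le_downProb.compl
      hV.measurable_stochInv hF (fun u hu => (hV.hasDerivAt_of_mem_right hdiff hu).hasDerivWithinAt)
      (fun u hu w hw => hV.stochInv_apply_of_mem_right (Ioo_subset_Icc_self hu) (not_le.mp hw))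
      (hV.strictMonoOn.injOn.mono Ioo_subset_Icc_self), hV.image_Ioo_right]
  refine setLIntegral_congr_fun measurableSet_Ioo fun u hu => ?_
  have hΔ := hV.downProb_mem_Ioo hdiff (hV.image_Ioo_right ▸ mem_image_of_mem V hu)
  have hfibre : ((Iic (downProb V δ (V u)))ᶜ ∩ Ioo 0 1 : Set ℝ)
      =ᵐ[volume] Icc (downProb V δ (V u)) 1 := by
    rw [compl_Iic, Ioi_inter_Ioo, max_eq_left hΔ.1.le]
    exact Ioo_ae_eq_Icc
  change ∫⁻ w in (Iic (downProb V δ (V u)))ᶜ, _ ∂volume.restrict (Ioo 0 1) = _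
  rw [Measure.restrict_restrict measurableSet_Iic.compl, Measure.restrict_congr_set hfibre,
    lintegral_branchDensity_mul, branchInterval, branchProb, if_neg hu.1.not_ge, if_neg hu.1.not_ge,
    hV.abs_deriv_of_mem_right hdiff hu]

theorem aemeasurable_branchDensity (hV : IsVTransform V δ) :
    AEMeasurable (fun x : ℝ × ℝ => branchDensity δ x.1 (downProb V δ (V x.1)) x.2)
      ((volume.restrict (Icc 0 1)).prod volume) :=
  (measurable_branchDensity δ).comp_aemeasurable (measurable_fst.aemeasurable.prodMk
    (((hV.measurable_downProb.comp_aemeasurable hV.aemeasurable).comp_fst).prodMk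
      measurable_snd.aemeasurable))

theorem map_stochInv_prodMk (hV : IsVTransform V δ)
    (hdiff : DifferentiableOn ℝ V (Ioo 0 1 \ {δ})) :
    ((volume.restrict (Icc 0 1)).prod (volume.restrict (Icc 0 1))).map
        (fun x => (stochInv V δ x.1 x.2, x.2))
      = ((volume.restrict (Icc 0 1)).prod volume).withDensity
          fun x => branchDensity δ x.1 (downProb V δ (V x.1)) x.2 := by
  have hδ := hV.fulcrum_mem
  refine Measure.ext_of_lintegral _ fun F hF => ?_
  rw [lintegral_map hF (hV.measurable_stochInv.prodMk measurable_snd),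
    ← lintegral_add_compl _ hV.measurableSet_le_downProb, hV.setLIntegral_stochInv_left hdiff hF,
    hV.setLIntegral_stochInv_right hdiff hF,
    lintegral_withDensity_eq_lintegral_mul₀ hV.aemeasurable_branchDensity hF.aemeasurable,
    lintegral_prod _ (hV.aemeasurable_branchDensity.mul hF.aemeasurable),
    setLIntegral_Icc_eq_add_Ioo hδ.1.le hδ.2.le]
  rfl

variable {ι : Type*}

theorem measurable_pi_stochInv (hV : IsVTransform V δ) :
    Measurable fun (x : (ι → ℝ) × (ι → ℝ)) i => stochInv V δ (x.1 i) (x.2 i) :=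
  measurable_pi_lambda _ fun i =>
    hV.measurable_stochInv.comp (f := fun x : (ι → ℝ) × (ι → ℝ) => (x.1 i, x.2 i)) (by fun_prop)

variable [Fintype ι]

theorem aemeasurable_prod_branchDensity (hV : IsVTransform V δ) :
    AEMeasurable (fun x : (ι → ℝ) × (ι → ℝ) =>
        ∏ i, branchDensity δ (x.1 i) (downProb V δ (V (x.1 i))) (x.2 i))
      ((Measure.pi fun _ => volume.restrict (Icc 0 1)).prod volume) := by
  refine Finset.aemeasurable_fun_prod _ fun i _ => ?_
  have heval : Measure.QuasiMeasurePreserving (fun x : (ι → ℝ) × (ι → ℝ) => (x.1 i, x.2 i))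
      ((Measure.pi fun _ => volume.restrict (Icc 0 1)).prod volume)
      ((volume.restrict (Icc 0 1)).prod volume) :=
    QuasiMeasurePreserving.prodMap (Measure.quasiMeasurePreserving_eval _ i)
      (Measure.quasiMeasurePreserving_eval _ i)
  exact hV.aemeasurable_branchDensity.comp_quasiMeasurePreserving heval

theorem map_pi_stochInv_prodMk (hV : IsVTransform V δ)
    (hdiff : DifferentiableOn ℝ V (Ioo 0 1 \ {δ})) :
    ((Measure.pi fun _ : ι => volume.restrict (Icc 0 1)).prod
        (Measure.pi fun _ : ι => volume.restrict (Icc 0 1))).map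
        (fun x => (fun i => stochInv V δ (x.1 i) (x.2 i), x.2))
      = ((Measure.pi fun _ => volume.restrict (Icc 0 1)).prod volume).withDensity
          fun x : (ι → ℝ) × (ι → ℝ) =>
            ∏ i, branchDensity δ (x.1 i) (downProb V δ (V (x.1 i))) (x.2 i) := by
  have hmap := hV.map_stochInv_prodMk hdiff
  have hfinite : IsFiniteMeasure (((volume.restrict (Icc (0 : ℝ) 1)).prod volume).withDensity
      fun x : ℝ × ℝ => branchDensity δ x.1 (downProb V δ (V x.1)) x.2) := hmap ▸ inferInstance
  exact map_pi_prod_pi_eq_withDensity (T := fun _ x => (stochInv V δ x.1 x.2, x.2))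
    (k := fun _ x => branchDensity δ x.1 (downProb V δ (V x.1)) x.2)
    (fun _ => hV.measurable_stochInv.prodMk measurable_snd)
    (fun _ => hV.aemeasurable_branchDensity) fun _ => hmap

theorem aemeasurable_comp_pi_apply (hV : IsVTransform V δ)
    {f : (ι → ℝ) × (ι → ℝ) → ENNReal} (hf : Measurable f) :
    AEMeasurable (fun x : (ι → ℝ) × (ι → ℝ) => f (fun i => V (x.1 i), x.2))
      ((Measure.pi fun _ => volume.restrict (Icc 0 1)).prod volume) := by
  have hpi : AEMeasurable (fun (u : ι → ℝ) i => V (u i))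
      (Measure.pi fun _ => volume.restrict (Icc 0 1)) :=
    aemeasurable_pi_lambda _ fun i =>
      hV.aemeasurable.comp_quasiMeasurePreserving (Measure.quasiMeasurePreserving_eval _ i)
  exact hf.comp_aemeasurable (hpi.comp_fst.prodMk measurable_snd.aemeasurable)

theorem ae_comp_pi_apply_stochInv (hV : IsVTransform V δ) (f : (ι → ℝ) × (ι → ℝ) → ENNReal) :
    ∀ᵐ x ∂(Measure.pi fun _ : ι => volume.restrict (Icc (0 : ℝ) 1)).prod
        (Measure.pi fun _ : ι => volume.restrict (Icc (0 : ℝ) 1)),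
      f x = f (fun i => V (stochInv V δ (x.1 i) (x.2 i)), x.2) := by
  have hmem (i : ι) : ∀ᵐ x ∂(Measure.pi fun _ : ι => volume.restrict (Icc (0 : ℝ) 1)).prod
      (Measure.pi fun _ : ι => volume.restrict (Icc (0 : ℝ) 1)), x.1 i ∈ Icc (0 : ℝ) 1 :=
    ((Measure.quasiMeasurePreserving_eval _ i).comp Measure.quasiMeasurePreserving_fst).ae
      (ae_restrict_mem measurableSet_Icc)
  filter_upwards [ae_all_iff.mpr hmem] with x hx
  simp only [fun i => hV.apply_stochInv (hx i) (x.2 i)]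

theorem map_withDensity_pi_stochInv (hV : IsVTransform V δ)
    (hdiff : DifferentiableOn ℝ V (Ioo 0 1 \ {δ})) {f : (ι → ℝ) × (ι → ℝ) → ENNReal}
    (hf : Measurable f) :
    (((Measure.pi fun _ : ι => volume.restrict (Icc 0 1)).prod
        (Measure.pi fun _ : ι => volume.restrict (Icc 0 1))).withDensity f).map
        (fun x i => stochInv V δ (x.1 i) (x.2 i))
      = (Measure.pi fun _ => volume.restrict (Icc 0 1)).withDensity fun u =>
          ∫⁻ z, (∏ i, branchDensity δ (u i) (downProb V δ (V (u i))) (z i))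
            * f (fun i => V (u i), z) := by
  let T (x : (ι → ℝ) × (ι → ℝ)) : (ι → ℝ) × (ι → ℝ) :=
    (fun i => stochInv V δ (x.1 i) (x.2 i), x.2)
  let g (x : (ι → ℝ) × (ι → ℝ)) : ENNReal := f (fun i => V (x.1 i), x.2)
  have hT : Measurable T := hV.measurable_pi_stochInv.prodMk measurable_snd
  have hg : AEMeasurable g ((Measure.pi fun _ => volume.restrict (Icc 0 1)).prod volume) :=
    hV.aemeasurable_comp_pi_apply hf
  have hgT : f =ᵐ[(Measure.pi fun _ : ι => volume.restrict (Icc 0 1)).prod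
      (Measure.pi fun _ : ι => volume.restrict (Icc 0 1))] g ∘ T :=
    hV.ae_comp_pi_apply_stochInv f
  have hmap := hV.map_pi_stochInv_prodMk (ι := ι) hdiff
  change Measure.map (Prod.fst ∘ T) _ = _
  rw [← Measure.map_map measurable_fst hT, withDensity_congr_ae hgT, map_withDensity_comp hT, hmap,
    ← withDensity_mul₀ hV.aemeasurable_prod_branchDensity hg,
    map_fst_withDensity_prod (hV.aemeasurable_prod_branchDensity.mul hg)]
  · rfl
  · rw [hmap]
    exact hg.mono_ac (withDensity_absolutelyContinuous _ _)

theorem ae_downProb_apply_mem_Ioo (hV : IsVTransform V δ)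
    (hdiff : DifferentiableOn ℝ V (Ioo 0 1 \ {δ})) :
    ∀ᵐ u ∂volume.restrict (Icc 0 1), downProb V δ (V u) ∈ Ioo 0 1 := by
  rw [← Measure.restrict_congr_set Ioo_ae_eq_Icc]
  filter_upwards [ae_restrict_mem measurableSet_Ioo, Measure.ae_ne _ δ] with u hu hne
  refine hV.downProb_mem_Ioo hdiff ?_
  rcases hne.lt_or_gt with h | h
  · exact hV.image_Ioo_left ▸ mem_image_of_mem V ⟨hu.1, h⟩
  · exact hV.image_Ioo_right ▸ mem_image_of_mem V ⟨h, hu.2⟩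

theorem ae_pi_downProb_apply_mem_Ioo (hV : IsVTransform V δ)
    (hdiff : DifferentiableOn ℝ V (Ioo 0 1 \ {δ})) :
    ∀ᵐ u ∂Measure.pi fun _ : ι => volume.restrict (Icc 0 1), ∀ i,
      downProb V δ (V (u i)) ∈ Ioo 0 1 :=
  ae_all_iff.mpr fun _ =>
    (Measure.tendsto_eval_ae_ae (μ := fun _ : ι => volume.restrict (Icc (0 : ℝ) 1))).eventually
      (hV.ae_downProb_apply_mem_Ioo hdiff)

end IsVTransform

section ProductDensity

variable {ι : Type*} [Fintype ι] {δ : ℝ} {u x : ι → ℝ}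

theorem branchProb_pos {δ u x : ℝ} (hx : x ∈ Ioo 0 1) : 0 < branchProb δ u x := by
  unfold branchProb
  split_ifs
  exacts [hx.1, sub_pos.mpr hx.2]

theorem prod_branchDensity (hx : ∀ i, x i ∈ Ioo 0 1) (z : ι → ℝ) :
    ∏ i, branchDensity δ (u i) (x i) (z i)
      = (univ.pi fun i => branchInterval δ (u i) (x i)).indicator
          (fun _ => ENNReal.ofReal (∏ i, branchProb δ (u i) (x i))⁻¹) z := by
  by_cases hz : ∀ i, z i ∈ branchInterval δ (u i) (x i)
  · rw [indicator_of_mem (mem_univ_pi.mpr hz), ← Finset.prod_inv_distrib,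
      ENNReal.ofReal_prod_of_nonneg fun i _ => inv_nonneg.mpr (branchProb_pos (hx i)).le]
    exact Finset.prod_congr rfl fun i _ => indicator_of_mem (hz i) _
  · obtain ⟨i, hi⟩ := not_forall.mp hz
    rw [indicator_of_notMem (mt mem_univ_pi.mp hz)]
    exact Finset.prod_eq_zero (Finset.mem_univ i) (indicator_of_notMem hi _)

theorem lintegral_prod_branchDensity_mul_ofReal (hx : ∀ i, x i ∈ Ioo 0 1) {f : (ι → ℝ) → ℝ}
    (hf : Measurable f) (hf0 : ∀ z, 0 ≤ f z)
    (hfinite : ∫⁻ z, (∏ i, branchDensity δ (u i) (x i) (z i)) * ENNReal.ofReal (f z) < ⊤) :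
    ∫⁻ z, (∏ i, branchDensity δ (u i) (x i) (z i)) * ENNReal.ofReal (f z)
      = ENNReal.ofReal ((∫ z in univ.pi fun i => branchInterval δ (u i) (x i), f z)
          / ∏ i, branchProb δ (u i) (x i)) := by
  have hpos : 0 < (∏ i, branchProb δ (u i) (x i))⁻¹ :=
    inv_pos.mpr (Finset.prod_pos fun i _ => branchProb_pos (hx i))
  have heq : ∫⁻ z, (∏ i, branchDensity δ (u i) (x i) (z i)) * ENNReal.ofReal (f z)
      = ENNReal.ofReal (∏ i, branchProb δ (u i) (x i))⁻¹
          * ∫⁻ z in univ.pi fun i => branchInterval δ (u i) (x i), ENNReal.ofReal (f z) := by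
    rw [← lintegral_const_mul _ hf.ennreal_ofReal, ← lintegral_indicator
      (MeasurableSet.univ_pi fun i => measurableSet_branchInterval δ (u i) (x i))]
    simp only [prod_branchDensity hx, indicator_mul_left]
  rw [heq] at hfinite ⊢
  have hint : IntegrableOn f (univ.pi fun i => branchInterval δ (u i) (x i)) :=
    (lintegral_ofReal_ne_top_iff_integrable hf.aestronglyMeasurable (ae_of_all _ hf0)).mp
      (ENNReal.lt_top_of_mul_ne_top_right hfinite.ne (ENNReal.ofReal_pos.mpr hpos).ne').ne
  rw [← ofReal_integral_eq_lintegral_ofReal hint (ae_of_all _ hf0),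
    ← ENNReal.ofReal_mul hpos.le, inv_mul_eq_div]

end ProductDensity

theorem stochInv_density_general_general {Ω ι : Type*} [MeasurableSpace Ω] [Fintype ι]
    {μ : Measure Ω} [IsFiniteMeasure μ] {V : ℝ → ℝ} {δ : ℝ} (hV : IsVTransform V δ)
    (hdiff : DifferentiableOn ℝ V (Ioo 0 1 \ {δ})) {X Y : Ω → ι → ℝ} (hX : AEMeasurable X μ)
    (hY : AEMeasurable Y μ) (hXmem : ∀ᵐ ω ∂μ, ∀ i, X ω i ∈ Icc 0 1)
    (hYmem : ∀ᵐ ω ∂μ, ∀ i, Y ω i ∈ Icc 0 1) {c : (ι → ℝ) → (ι → ℝ) → ℝ}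
    (hc : Measurable fun p : (ι → ℝ) × (ι → ℝ) => c p.1 p.2) (hc0 : ∀ x y, 0 ≤ c x y)
    (hlaw : μ.map (fun ω => (X ω, Y ω)) = volume.withDensity fun p => ENNReal.ofReal (c p.1 p.2)) :
    μ.map (fun ω i => stochInv V δ (X ω i) (Y ω i))
      = (volume.restrict (univ.pi fun _ => Icc 0 1)).withDensity fun u => ENNReal.ofReal
          ((∫ z in univ.pi fun i => branchInterval δ (u i) (downProb V δ (V (u i))),
              c (fun i => V (u i)) z)
            / ∏ i, branchProb δ (u i) (downProb V δ (V (u i)))) := by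
  have hcube : MeasurableSet (univ.pi fun _ : ι => Icc (0 : ℝ) 1) :=
    MeasurableSet.univ_pi fun _ => measurableSet_Icc
  have hlaw_cube := map_eq_restrict_withDensity (hX.prodMk hY) (hcube.prod hcube)
    (by filter_upwards [hXmem, hYmem] with ω hx hy
        exact ⟨mem_univ_pi.mpr hx, mem_univ_pi.mpr hy⟩) hlaw
  rw [Measure.volume_eq_prod, ← Measure.prod_restrict, volume_pi,
    Measure.restrict_pi_pi] at hlaw_cube
  have hU : μ.map (fun ω i => stochInv V δ (X ω i) (Y ω i)) = _ :=
    (AEMeasurable.map_map_of_aemeasurable hV.measurable_pi_stochInv.aemeasurable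
      (hX.prodMk hY)).symm
  rw [hlaw_cube, hV.map_withDensity_pi_stochInv hdiff hc.ennreal_ofReal] at hU
  have hfinite := ae_lt_top' (hV.aemeasurable_prod_branchDensity.mul
    (hV.aemeasurable_comp_pi_apply (ι := ι) hc.ennreal_ofReal)).lintegral_prod_right' (by
      rw [← setLIntegral_univ, ← withDensity_apply _ MeasurableSet.univ]
      exact hU ▸ measure_ne_top _ _)
  rw [hU, volume_pi, Measure.restrict_pi_pi]
  refine withDensity_congr_ae ?_
  filter_upwards [hV.ae_pi_downProb_apply_mem_Ioo hdiff, hfinite] with u hΔ hu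
  exact lintegral_prod_branchDensity_mul_ofReal hΔ (hc.comp measurable_prodMk_left) (hc0 _) hu

/-- Theorem 2 of the paper, general case: if `(V_i, W_i)` are
pairs of uniform variables with `V_i ⫫ W_i` for each `i` and the joint law of
`(V, W)` has density `c_{V,W}`, then `U` with `U_i = 𝒱⁻¹(V_i, W_i)` has the
joint density (9) of the paper with respect to Lebesgue measure on `[0,1]^d`. -/
theorem stochInv_density_general {Ω : Type*} [MeasurableSpace Ω]
    (μ : Measure Ω) [IsProbabilityMeasure μ] (d : ℕ)
    (V : ℝ → ℝ) (δ : ℝ) (hV : IsVTransform V δ)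
    (hdiff : ∀ u ∈ Set.Icc (0:ℝ) 1, u ≠ δ →
      DifferentiableWithinAt ℝ V (Set.Icc 0 1) u)
    (hΔmeas : Measurable (downProb V δ))
    (Vvec Wvec : Ω → Fin d → ℝ)
    (hVvec : Measurable Vvec) (hWvec : Measurable Wvec)
    (hVmarg : ∀ i, Measure.map (fun ω => Vvec ω i) μ
      = volume.restrict (Set.Icc 0 1))
    (hWmarg : ∀ i, Measure.map (fun ω => Wvec ω i) μ
      = volume.restrict (Set.Icc 0 1))
    (hpair : ∀ i, IndepFun (fun ω => Vvec ω i) (fun ω => Wvec ω i) μ)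
    (cVW : (Fin d → ℝ) → (Fin d → ℝ) → ℝ)
    (hcVW : Measurable fun p : (Fin d → ℝ) × (Fin d → ℝ) => cVW p.1 p.2)
    (hcVWnonneg : ∀ x y, 0 ≤ cVW x y)
    (hdens : Measure.map (fun ω => (Vvec ω, Wvec ω)) μ
      = volume.withDensity (fun p => ENNReal.ofReal (cVW p.1 p.2))) :
    Measure.map (fun ω i => stochInv V δ (Vvec ω i) (Wvec ω i)) μ =
      (volume.restrict (Set.univ.pi fun _ : Fin d => Set.Icc (0:ℝ) 1)).withDensity
        (fun u => ENNReal.ofReal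
          ((∫ z in Set.univ.pi (fun i => if u i ≤ δ
                then Set.Icc (0:ℝ) (downProb V δ (V (u i)))
                else Set.Icc (downProb V δ (V (u i))) 1),
              cVW (fun i => V (u i)) z) /
            ∏ i, (if u i ≤ δ then downProb V δ (V (u i))
                  else 1 - downProb V δ (V (u i))))) := by
  exact stochInv_density_general_general hV
    (fun u hu => (hdiff u (Ioo_subset_Icc_self hu.1) hu.2).mono
      (sdiff_subset.trans Ioo_subset_Icc_self))
    hVvec.aemeasurable hWvec.aemeasurable
    (ae_all_iff.mpr fun i => ae_mem_of_map_eq_restrict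
      ((measurable_pi_apply i).comp hVvec).aemeasurable measurableSet_Icc (hVmarg i))
    (ae_all_iff.mpr fun i => ae_mem_of_map_eq_restrict
      ((measurable_pi_apply i).comp hWvec).aemeasurable measurableSet_Icc (hWmarg i))
    hcVW hcVWnonneg hdens
end
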